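/- Let $G$ be a finite group acting freely and measurably on a measurable space $X$, let $\nu$ be a $\sigma$-finite $G$-invariant measure on $X$ (that is, $\nu(gB)=\nu(B)$ for all $g\in G$ and all measurable $B\subseteq X$), and let $P$ and $Q$ be probability measures on $X$ that have densities with respect to $\nu$. For $g\in G$ let $P_g$ and $Q_g$ denote the pushforwards of $P$ and $Q$ under $x\mapsto gx$. Let $m:X\to M$ be a maximal invariant, that is, a measurable map into a measurable space $M$ such that $m(gx)=m(x)$ for all $g\in G$, $x\in X$, and such that $m(x)=m(y)$ implies $y=gx$ for some $g\in G$; let $P^M$ and $Q^M$ be the pushforwards of $P$ and $Q$ under $m$ (they are also those of every $P_g$ and $Q_g$). Assume that either $X$ is a standard Borel space and $M$ is countably separated (countably many measurable sets separate the points of $M$; for example, $M$ is standard Borel), or, for general $X$ and $M$, every measurable $G$-invariant subset of $X$ has the form $m^{-1}(B)$ with $B\subseteq M$ measurable (for example, $M=X/G$ with the quotient $\sigma$-algebra). Then the minimum over all pairs of probability vectors $(\Pi_0,\Pi_1)$ on $G$ of the Kullback–Leibler divergence $$\mathrm{KL}\Big(\sum_{g\in G}\Pi_1(g)\,Q_g,\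 \sum_{g\in G}\Pi_0(g)\,P_g\Big)\in[0,\infty]$$ exists and equals $\mathrm{KL}(Q^M,P^M)$, and it is attained when $\Pi_0$ and $\Pi_1$ are both the uniform distribution on $G$. -/

import Mathlib

open MeasureTheory

/-- A measurable map `m : X → M` is a maximal invariant for the action of `G` on `X` if it is
constant on orbits and separates distinct orbits. -/
structure IsMaximalInvariant (G : Type*) {X M : Type*} [Group G] [MulAction G X]
    [MeasurableSpace X] [MeasurableSpace M] (m : X → M) : Prop where
  measurable : Measurable m
  invariant : ∀ (g : G) (x : X), m (g • x) = m x
  maximal : ∀ x y : X, m x = m y → ∃ g : G, y = g • x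

/-- The σ-algebra of `M` is rich enough for the orbit space: every measurable `G`-invariant subset
of `X` is the preimage under `m` of a measurable subset of `M`.
For a maximal invariant `m` onto `M` this says that `M` carries the quotient σ-algebra. -/
def GeneratesInvariantSets (G : Type*) {X M : Type*} [Group G] [MulAction G X]
    [MeasurableSpace X] [MeasurableSpace M] (m : X → M) : Prop :=
  ∀ A : Set X, MeasurableSet A → (∀ (g : G), ∀ x ∈ A, g • x ∈ A) →
    ∃ B : Set M, MeasurableSet B ∧ m ⁻¹' B = A

/-- The mixture `∑ g, w g • (g • ·)_* R` of the translates of a measure `R`. -/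
noncomputable def translateMixture {G X : Type*} [Group G] [Fintype G] [MulAction G X]
    [MeasurableSpace X] (w : G → ENNReal) (R : Measure X) : Measure X :=
  ∑ g : G, w g • R.map (fun x => g • x)

open InformationTheory ProbabilityTheory
open scoped ENNReal

/-- If the σ-algebra of `α` is generated by `f`, pushing forward along `f` preserves the
Kullback–Leibler divergence. -/
theorem klDiv_map_of_eq_comap {α β : Type*} [mα : MeasurableSpace α] [mβ : MeasurableSpace β]
    {f : α → β} (hf : mα = mβ.comap f) (μ ν : Measure α) [IsFiniteMeasure μ] [IsFiniteMeasure ν] :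
    klDiv (μ.map f) (ν.map f) = klDiv μ ν := by
  have hfm : Measurable f := measurable_iff_comap_le.2 hf.ge
  have hset : ∀ A : Set α, MeasurableSet A → ∃ B : Set β, MeasurableSet B ∧ f ⁻¹' B = A := by
    intro A hA
    rw [hf] at hA
    exact hA
  refine le_antisymm (klDiv_map_le μ ν hfm) ?_
  by_cases hac : μ.map f ≪ ν.map f
  swap
  · simp [klDiv_of_not_ac hac]
  have hμ : μ = ν.withDensity fun x => (μ.map f).rnDeriv (ν.map f) (f x) := by
    ext A hA
    obtain ⟨B, hB, rfl⟩ := hset A hA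
    rw [withDensity_apply _ hA, ← Measure.map_apply hfm hB,
      ← setLIntegral_map hB (Measure.measurable_rnDeriv _ _) hfm,
      Measure.setLIntegral_rnDeriv hac]
  have hμν : μ ≪ ν := by
    rw [hμ]
    exact withDensity_absolutelyContinuous _ _
  have hrn : μ.rnDeriv ν =ᵐ[ν] fun x => (μ.map f).rnDeriv (ν.map f) (f x) := by
    have h := Measure.rnDeriv_withDensity ν
      ((Measure.measurable_rnDeriv (μ.map f) (ν.map f)).comp hfm)
    have h' : (ν.withDensity ((μ.map f).rnDeriv (ν.map f) ∘ f)) = μ := hμ.symm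
    rwa [h'] at h
  rw [klDiv_eq_lintegral_klFun_of_ac hac, klDiv_eq_lintegral_klFun_of_ac hμν,
    lintegral_map (by fun_prop) hfm]
  refine le_of_eq (lintegral_congr_ae ?_)
  filter_upwards [hrn] with x hx
  rw [hx]

section Action

variable {G : Type*} [Group G] {X : Type*} [MeasurableSpace X] [MulAction G X]
  {M : Type*} [MeasurableSpace M] {m : X → M}

/-- On a standard Borel space, a maximal invariant with values in a countably separated space
generates the σ-algebra of invariant measurable sets. -/
theorem IsMaximalInvariant.generatesInvariantSets [StandardBorelSpace X]
    [MeasurableSpace.CountablySeparated M] (hm : IsMaximalInvariant G m) :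
    GeneratesInvariantSets G m := by
  intro A hA hinv
  have hpre : m ⁻¹' (m '' A) = A := by
    refine Set.Subset.antisymm ?_ (Set.subset_preimage_image m A)
    rintro x ⟨y, hy, hyx⟩
    obtain ⟨g, rfl⟩ := hm.maximal y x hyx
    exact hinv g y hy
  have : MeasurableSpace.CountablySeparated (Set.range m) := MeasurableSpace.Subtype.countablySeparated
  have h : MeasurableSet (Subtype.val ⁻¹' (m '' A) : Set (Set.range m)) :=
    (hm.measurable.measurableSet_preimage_iff_preimage_val).1 (by rwa [hpre])
  obtain ⟨B, hB, hBA⟩ := h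
  refine ⟨B, hB, ?_⟩
  rw [← hpre]
  ext x
  exact Set.ext_iff.1 hBA ⟨m x, x, rfl⟩

variable [Fintype G]

/-- The uniform distribution on the orbit of `x`. -/
noncomputable def orbitMeasure (G : Type*) [Group G] [Fintype G] [MulAction G X] (x : X) :
    Measure X :=
  ∑ g : G, (Fintype.card G : ℝ≥0∞)⁻¹ • Measure.dirac (g • x)

theorem orbitMeasure_smul (h : G) (x : X) : orbitMeasure G (h • x) = orbitMeasure G x := by
  unfold orbitMeasure
  refine Fintype.sum_equiv (Equiv.mulRight h) _ _ fun g => ?_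
  simp [mul_smul]

theorem orbitMeasure_apply (x : X) {A : Set X} (hA : MeasurableSet A) :
    orbitMeasure G x A =
      ∑ g : G, (Fintype.card G : ℝ≥0∞)⁻¹ * A.indicator (fun _ => 1) (g • x) := by
  simp [orbitMeasure, Measure.finsetSum_apply, Measure.dirac_apply' _ hA]
  rfl

theorem sum_card_inv (G : Type*) [Group G] [Fintype G] :
    ∑ _g : G, (Fintype.card G : ℝ≥0∞)⁻¹ = 1 := by
  simp [ENNReal.mul_inv_cancel]

instance isProbabilityMeasure_orbitMeasure (x : X) : IsProbabilityMeasure (orbitMeasure G x) :=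
  ⟨by simp [orbitMeasure_apply]
      exact ENNReal.mul_inv_cancel (by simp) (by simp)⟩

theorem measurable_orbitMeasure (hmeas : ∀ g : G, Measurable fun x : X => g • x) :
    Measurable (orbitMeasure (X := X) G) := by
  refine Measure.measurable_of_measurable_coe _ fun A hA => ?_
  simp_rw [orbitMeasure_apply _ hA]
  exact Finset.measurable_sum _ fun g _ =>
    ((measurable_const.indicator hA).comp (hmeas g)).const_mul _

/-- The kernel from the range of a maximal invariant that sends a point to the uniform distribution
on the corresponding orbit. -/
noncomputable def orbitKernel (hmeas : ∀ g : G, Measurable fun x : X => g • x)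
    (hgen : GeneratesInvariantSets G m) : Kernel (Set.range m) X where
  toFun y := orbitMeasure G y.2.choose
  measurable' := by
    intro S hS
    obtain ⟨B, hB, hBS⟩ := hgen (orbitMeasure G ⁻¹' S) (measurable_orbitMeasure hmeas hS)
      fun g x hx => by simpa [orbitMeasure_smul] using hx
    refine ⟨B, hB, ?_⟩
    ext y
    have h := Set.ext_iff.1 hBS y.2.choose
    rwa [Set.mem_preimage, y.2.choose_spec] at h

theorem orbitKernel_apply (hmeas : ∀ g : G, Measurable fun x : X => g • x)
    (hm : IsMaximalInvariant G m) (hgen : GeneratesInvariantSets G m) (x : X) :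
    orbitKernel hmeas hgen (Set.rangeFactorization m x) = orbitMeasure G x := by
  change orbitMeasure G (Set.rangeFactorization m x).2.choose = _
  obtain ⟨g, hg⟩ := hm.maximal x _ (Set.rangeFactorization m x).2.choose_spec.symm
  rw [hg, orbitMeasure_smul]

instance isMarkovKernel_orbitKernel (hmeas : ∀ g : G, Measurable fun x : X => g • x)
    (hgen : GeneratesInvariantSets G m) :
    IsMarkovKernel (orbitKernel hmeas hgen) :=
  ⟨fun y => isProbabilityMeasure_orbitMeasure (G := G) y.2.choose⟩

theorem orbitKernel_comp_map (hmeas : ∀ g : G, Measurable fun x : X => g • x)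
    (hm : IsMaximalInvariant G m) (hgen : GeneratesInvariantSets G m) (R : Measure X) :
    (R.map (Set.rangeFactorization m)).bind (orbitKernel hmeas hgen) =
      translateMixture (fun _ : G => (Fintype.card G : ℝ≥0∞)⁻¹) R := by
  have hm' : Measurable (Set.rangeFactorization m) := hm.measurable.subtype_mk
  ext A hA
  rw [Measure.bind_apply hA (Kernel.aemeasurable _),
    lintegral_map (Kernel.measurable_coe _ hA) hm']
  simp_rw [orbitKernel_apply hmeas hm hgen, orbitMeasure_apply _ hA]
  have hind : ∀ g : G, Measurable fun x : X => A.indicator (fun _ => (1 : ℝ≥0∞)) (g • x) :=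
    fun g => (measurable_const.indicator hA).comp (hmeas g)
  rw [lintegral_finsetSum _ fun g _ => (hind g).const_mul _]
  simp only [translateMixture, Measure.finsetSum_apply, Measure.smul_apply, smul_eq_mul]
  refine Finset.sum_congr rfl fun g _ => ?_
  rw [lintegral_const_mul _ (hind g),
    ← lintegral_map (f := A.indicator fun _ => (1 : ℝ≥0∞)) (measurable_const.indicator hA)
      (hmeas g), lintegral_indicator_const hA, one_mul]

theorem map_translateMixture (hmeas : ∀ g : G, Measurable fun x : X => g • x)
    (hm : IsMaximalInvariant G m) {w : G → ℝ≥0∞} (hw : ∑ g, w g = 1) (R : Measure X) :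
    (translateMixture w R).map m = R.map m := by
  ext B hB
  have h : ∀ g : G, (fun x : X => g • x) ⁻¹' (m ⁻¹' B) = m ⁻¹' B := fun g => by
    ext x
    simp [hm.invariant]
  rw [Measure.map_apply hm.measurable hB, Measure.map_apply hm.measurable hB]
  simp only [translateMixture, Measure.finsetSum_apply, Measure.smul_apply, smul_eq_mul,
    Measure.map_apply (hmeas _) (hm.measurable hB), h]
  rw [← Finset.sum_mul, hw, one_mul]

theorem isFiniteMeasure_translateMixture (hmeas : ∀ g : G, Measurable fun x : X => g • x)
    {w : G → ℝ≥0∞} (hw : ∑ g, w g = 1) (R : Measure X) [IsFiniteMeasure R] :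
    IsFiniteMeasure (translateMixture w R) := by
  refine ⟨?_⟩
  simp only [translateMixture, Measure.finsetSum_apply, Measure.smul_apply, smul_eq_mul,
    Measure.map_apply (hmeas _) MeasurableSet.univ, Set.preimage_univ]
  rw [← Finset.sum_mul, hw, one_mul]
  exact measure_lt_top R _

theorem klDiv_map_le_klDiv_translateMixture (hmeas : ∀ g : G, Measurable fun x : X => g • x)
    (hm : IsMaximalInvariant G m) {w₀ w₁ : G → ℝ≥0∞} (hw₀ : ∑ g, w₀ g = 1)
    (hw₁ : ∑ g, w₁ g = 1) (P Q : Measure X) [IsFiniteMeasure P] [IsFiniteMeasure Q] :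
    klDiv (Q.map m) (P.map m) ≤ klDiv (translateMixture w₁ Q) (translateMixture w₀ P) := by
  have := isFiniteMeasure_translateMixture hmeas hw₀ P
  have := isFiniteMeasure_translateMixture hmeas hw₁ Q
  rw [← map_translateMixture hmeas hm hw₀ P, ← map_translateMixture hmeas hm hw₁ Q]
  exact klDiv_map_le _ _ hm.measurable

theorem klDiv_uniform_translateMixture (hmeas : ∀ g : G, Measurable fun x : X => g • x)
    (hm : IsMaximalInvariant G m) (hgen : GeneratesInvariantSets G m)
    (P Q : Measure X) [IsFiniteMeasure P] [IsFiniteMeasure Q] :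
    klDiv (translateMixture (fun _ : G => (Fintype.card G : ℝ≥0∞)⁻¹) Q)
        (translateMixture (fun _ : G => (Fintype.card G : ℝ≥0∞)⁻¹) P) =
      klDiv (Q.map m) (P.map m) := by
  refine le_antisymm ?_
    (klDiv_map_le_klDiv_translateMixture hmeas hm (sum_card_inv G) (sum_card_inv G) P Q)
  have hm' : Measurable (Set.rangeFactorization m) := hm.measurable.subtype_mk
  have hmap : ∀ R : Measure X,
      R.map m = (R.map (Set.rangeFactorization m)).map Subtype.val := fun R => by
    rw [Measure.map_map measurable_subtype_coe hm']
    rfl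
  rw [hmap Q, hmap P, klDiv_map_of_eq_comap rfl, ← orbitKernel_comp_map hmeas hm hgen Q,
    ← orbitKernel_comp_map hmeas hm hgen P]
  exact klDiv_comp_right_le _ _ _

end Action

theorem finite_group_kl_min_eq_kl_maximal_invariant
    {G : Type*} [Group G] [Fintype G]
    {X : Type*} [MeasurableSpace X] [MulAction G X]
    (hmeas : ∀ g : G, Measurable fun x : X => g • x)
    (hfree : ∀ (g : G) (x : X), g • x = x → g = 1)
    (ν : Measure X) [SigmaFinite ν]
    (hν : ∀ (g : G) (B : Set X), MeasurableSet B → ν ((fun x => g • x) '' B) = ν B)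
    (P Q : Measure X) [IsProbabilityMeasure P] [IsProbabilityMeasure Q]
    (hPν : P ≪ ν) (hQν : Q ≪ ν)
    {M : Type*} [MeasurableSpace M] (m : X → M) (hm : IsMaximalInvariant G m)
    (hreg : (StandardBorelSpace X ∧ MeasurableSpace.CountablySeparated M) ∨
      GeneratesInvariantSets G m) :
    IsLeast
      {r : ENNReal | ∃ w₀ w₁ : G → ENNReal, ∑ g, w₀ g = 1 ∧ ∑ g, w₁ g = 1 ∧
        r = InformationTheory.klDiv (translateMixture w₁ Q) (translateMixture w₀ P)}
      (InformationTheory.klDiv (Q.map m) (P.map m)) ∧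
    InformationTheory.klDiv
        (translateMixture (fun _ : G => (Fintype.card G : ENNReal)⁻¹) Q)
        (translateMixture (fun _ : G => (Fintype.card G : ENNReal)⁻¹) P)
      = InformationTheory.klDiv (Q.map m) (P.map m) := by
  have hgen : GeneratesInvariantSets G m := by
    rcases hreg with ⟨_, _⟩ | h
    · exact hm.generatesInvariantSets
    · exact h
  have hunif := klDiv_uniform_translateMixture hmeas hm hgen P Q
  refine ⟨⟨⟨_, _, sum_card_inv G, sum_card_inv G, hunif.symm⟩, ?_⟩, hunif⟩
  rintro r ⟨w₀, w₁, hw₀, hw₁, rfl⟩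
  exact klDiv_map_le_klDiv_translateMixture hmeas hm hw₀ hw₁ P Q
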